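/- arXiv:1206.3409 — 2 statements merged into one kernel-verified Lean document; each statement's English description precedes it below -/
import Mathlib

section
/- Let G be a simple graph on n vertices with a unique perfect matching, and let F be a field of characteristic not 2. Then mr⁻(F,G) = n. -/
/-!
Every skew matrix `A` describing `G` is nonsingular, which gives the theorem at once. The argument
runs over principal submatrices `A[S]`, by induction on `S`, and uses no Pfaffians.

* If `A[S]` is nonsingular then `S` is perfectly matched by nonzero entries of `A`
  (`exists_matchesOn`). Pick `a ∈ S` and solve `A u = e_a` on `S`. Some `j` has `A a j ≠ 0` and
  `u j ≠ 0`, and then `A[S \ {a, j}]` is again nonsingular.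
* If `S` has a unique perfect matching `m` then `A[S]` is nonsingular (`nonsingOn_of_unique`). Take
  `a ∈ S` and `b = m a`. By induction `A[S \ {a, b}]` is nonsingular, and hence `A[S \ {a}]` kills
  a vector `y` with `y b = 1`. Whenever `y j ≠ 0`, the matrix `A[S \ {a, j}]` is nonsingular, so
  `S \ {a, j}` has a perfect matching; by uniqueness `A a j ≠ 0` then forces `j = b`. Hence
  `A y = A a b • e_a` on `S` with `A a b ≠ 0`, so, `A` being skew, every vector in the kernel of
  `A[S]` vanishes at `a`. As `a` was arbitrary, the kernel is trivial.
-/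

open Matrix

/-- `A` is a skew-symmetric matrix over `F` whose off-diagonal zero–nonzero
pattern is described by the graph `G`. -/
def SkewDescribes (F : Type) [Field F] {V : Type}
    (G : SimpleGraph V) (A : Matrix V V F) : Prop :=
  Aᵀ = -A ∧ ∀ i j : V, i ≠ j → (A i j ≠ 0 ↔ G.Adj i j)

/-- The minimum skew rank of a graph `G` over a field `F`. -/
noncomputable def minSkewRank (F : Type) [Field F] {V : Type} [Fintype V]
    (G : SimpleGraph V) : ℕ :=
  sInf {r : ℕ | ∃ A : Matrix V V F, SkewDescribes F G A ∧ A.rank = r}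

/-- `M` is a matching of `G`: a set of pairwise disjoint edges of `G`. -/
def IsMatchingSet {V : Type} (G : SimpleGraph V) (M : Set (Sym2 V)) : Prop :=
  M ⊆ G.edgeSet ∧ ∀ e ∈ M, ∀ f ∈ M, e ≠ f → ∀ v : V, v ∈ e → v ∉ f

/-- The matching number of `G`: the maximum size of a set of pairwise disjoint
edges of `G`. -/
noncomputable def matchingNumber {V : Type} (G : SimpleGraph V) : ℕ :=
  sSup {k : ℕ | ∃ M : Set (Sym2 V), IsMatchingSet G M ∧ M.ncard = k}

/-- A perfect matching of `G`: a set of pairwise disjoint edges covering every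
vertex of `G`. -/
def IsPerfectMatchingSet {V : Type} (G : SimpleGraph V) (M : Set (Sym2 V)) : Prop :=
  IsMatchingSet G M ∧ ∀ v : V, ∃ e ∈ M, v ∈ e

section Helpers

variable {F V : Type} [Field F] [Fintype V]

/-- The principal submatrix `A[S]` is nonsingular. To avoid subtypes, a vector indexed by `S` is
encoded as a vector on `V` vanishing off `S`. -/
def NonsingOn (A : Matrix V V F) (S : Finset V) : Prop :=
  ∀ z : V → F, (∀ i, i ∉ S → z i = 0) → (∀ i ∈ S, (A *ᵥ z) i = 0) → z = 0

/-- `m` restricts to an involution of `S` pairing each vertex with one at which `A` has a nonzero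
entry. For a matrix with zero diagonal this is a perfect matching of the graph of `A` on `S`; the
values of `m` off `S` are irrelevant. -/
def MatchesOn (A : Matrix V V F) (S : Finset V) (m : V → V) : Prop :=
  ∀ i ∈ S, m i ∈ S ∧ m (m i) = i ∧ A i (m i) ≠ 0

omit [Fintype V] in
lemma skew_apply {A : Matrix V V F} (hA : Aᵀ = -A) (i j : V) : A j i = -A i j := by
  simpa using congrFun (congrFun hA i) j

omit [Fintype V] in
lemma skew_diag {A : Matrix V V F} (hF : (2 : F) ≠ 0) (hA : Aᵀ = -A) (i : V) : A i i = 0 := by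
  have h := skew_apply hA i i
  have h2 : (2 : F) * A i i = 0 := by linear_combination h
  exact (mul_eq_zero.mp h2).resolve_left hF

lemma skew_dot {A : Matrix V V F} (hA : Aᵀ = -A) (x y : V → F) :
    x ⬝ᵥ (A *ᵥ y) = -(y ⬝ᵥ (A *ᵥ x)) := by
  rw [dotProduct_mulVec, ← mulVec_transpose, hA, neg_mulVec, neg_dotProduct, dotProduct_comm]

lemma skew_dot_self {A : Matrix V V F} (hF : (2 : F) ≠ 0) (hA : Aᵀ = -A) (x : V → F) :
    x ⬝ᵥ (A *ᵥ x) = 0 := by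
  have h := skew_dot hA x x
  have h2 : (2 : F) * (x ⬝ᵥ (A *ᵥ x)) = 0 := by linear_combination h
  exact (mul_eq_zero.mp h2).resolve_left hF

/-- If each `x i * w i` vanishes except possibly at `a`, the dot product is its `a` term. -/
lemma dot_eq_single (x w : V → F) (a : V) (h : ∀ i, i ≠ a → x i = 0 ∨ w i = 0) :
    x ⬝ᵥ w = x a * w a :=
  Fintype.sum_eq_single a fun i hi => mul_eq_zero.mpr (h i hi)

open Classical in
lemma NonsingOn.exists_solution {A : Matrix V V F} {S : Finset V} (h : NonsingOn A S)
    (w : V → F) :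
    ∃ u : V → F, (∀ i, i ∉ S → u i = 0) ∧ ∀ i ∈ S, (A *ᵥ u) i = w i := by
  -- `T` is `A[S]` on `S` and the identity off `S`
  let P : (V → F) →ₗ[F] (V → F) :=
    { toFun := fun z i => if i ∈ S then z i else 0
      map_add' := by intro x y; ext i; by_cases hi : i ∈ S <;> simp [hi]
      map_smul' := by intro c x; ext i; by_cases hi : i ∈ S <;> simp [hi] }
  let T : (V → F) →ₗ[F] (V → F) := P ∘ₗ A.mulVecLin ∘ₗ P + (LinearMap.id - P)
  have hP : ∀ z i, P z i = if i ∈ S then z i else 0 := fun _ _ => rfl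
  have hTin : ∀ z, ∀ i ∈ S, T z i = (A *ᵥ P z) i := by
    intro z i hi
    simp [T, hP, hi]
  have hTout : ∀ z i, i ∉ S → T z i = z i := by
    intro z i hi
    simp [T, hP, hi]
  have hinj : Function.Injective T := by
    rw [injective_iff_map_eq_zero]
    intro z hz
    have h0 : ∀ i, i ∉ S → z i = 0 := fun i hi => by rw [← hTout z i hi, hz]; rfl
    have hPz : P z = z := by
      ext i
      rw [hP]
      split_ifs with hi
      · rfl
      · exact (h0 i hi).symm
    refine h z h0 fun i hi => ?_
    rw [← hPz, ← hTin z i hi, hz]; rfl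
  obtain ⟨z, hz⟩ := LinearMap.injective_iff_surjective.mp hinj w
  refine ⟨P z, fun i hi => by simp [hP, hi], fun i hi => ?_⟩
  rw [← hTin z i hi, hz]

variable [DecidableEq V]

omit [Fintype V] in
/-- Adding the pair `a`, `j` to a matching of `S \ {a, j}`. -/
lemma MatchesOn.extend {A : Matrix V V F} (hA : Aᵀ = -A) {S : Finset V} {a j : V}
    (ha : a ∈ S) (hj : j ∈ S) (haj : A a j ≠ 0) {m : V → V}
    (hm : MatchesOn A ((S.erase a).erase j) m) :
    MatchesOn A S (fun i => if i = a then j else if i = j then a else m i) := by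
  intro i hi
  have hja : A j a ≠ 0 := by rw [skew_apply hA a j]; exact neg_ne_zero.mpr haj
  by_cases hia : i = a
  · subst hia
    by_cases hij : j = i
    · subst hij; simp [hj, haj]
    · simp [hj, haj, hij]
  by_cases hij : i = j
  · subst hij; simp [hia, ha, hja]
  · obtain ⟨h1, h2, h3⟩ := hm i (by simp [hia, hij, hi])
    simp only [Finset.mem_erase] at h1
    simp [hia, hij, h1, h2, h3]

lemma exists_matchesOn {A : Matrix V V F} (hF : (2 : F) ≠ 0) (hA : Aᵀ = -A) (S : Finset V)
    (h : NonsingOn A S) : ∃ m, MatchesOn A S m := by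
  induction S using Finset.strongInduction with
  | H S ih =>
  rcases S.eq_empty_or_nonempty with rfl | ⟨a, ha⟩
  · exact ⟨id, fun i hi => by simp at hi⟩
  obtain ⟨u, hu0, hu⟩ := h.exists_solution (Pi.single a 1)
  have hAua : (A *ᵥ u) a = 1 := by simpa using hu a ha
  have hAu : ∀ i ∈ S, i ≠ a → (A *ᵥ u) i = 0 := fun i hi hia => by simpa [hia] using hu i hi
  have hdot : ∀ x : V → F, (∀ i, i ∉ S → x i = 0) → x ⬝ᵥ (A *ᵥ u) = x a := by
    intro x hx
    rw [dot_eq_single x _ a, hAua, mul_one]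
    intro i hia
    by_cases hi : i ∈ S
    · exact Or.inr (hAu i hi hia)
    · exact Or.inl (hx i hi)
  have hua : u a = 0 := by rw [← hdot u hu0, skew_dot_self hF hA]
  obtain ⟨j, -, hj⟩ : ∃ j ∈ Finset.univ, A a j * u j ≠ 0 := by
    apply Finset.exists_ne_zero_of_sum_ne_zero
    change (A *ᵥ u) a ≠ 0
    rw [hAua]; exact one_ne_zero
  have haj : A a j ≠ 0 := left_ne_zero_of_mul hj
  have huj : u j ≠ 0 := right_ne_zero_of_mul hj
  have hjS : j ∈ S := by by_contra hn; exact huj (hu0 j hn)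
  have hns : NonsingOn A ((S.erase a).erase j) := by
    intro z hz0 hz
    have hza : z a = 0 := hz0 a (by simp)
    have hzj : z j = 0 := hz0 j (by simp)
    have hzS : ∀ i, i ∉ S → z i = 0 := fun i hi => hz0 i (by simp [hi])
    -- pairing `A z` with `u` kills the `j` component of `A z`
    have hAzj : (A *ᵥ z) j = 0 := by
      have h1 : u ⬝ᵥ (A *ᵥ z) = u j * (A *ᵥ z) j := by
        apply dot_eq_single
        intro i hij
        by_cases hia : i = a
        · exact Or.inl (hia ▸ hua)
        by_cases hi : i ∈ S
        · exact Or.inr (hz i (by simp [hi, hia, hij]))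
        · exact Or.inl (hu0 i hi)
      rw [skew_dot hA, hdot z hzS, hza, neg_zero] at h1
      exact (mul_eq_zero.mp h1.symm).resolve_left huj
    -- so `z` is a multiple of `u` on `S`
    have hzu : z - (A *ᵥ z) a • u = 0 := by
      apply h
      · intro i hi; simp [hzS i hi, hu0 i hi]
      · intro i hi
        rw [mulVec_sub, mulVec_smul, Pi.sub_apply, Pi.smul_apply]
        by_cases hia : i = a
        · subst hia; simp [hAua]
        · rw [hAu i hi hia]
          by_cases hij : i = j
          · simp [hij, hAzj]
          · simp [hz i (by simp [hi, hia, hij])]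
    have hα : (A *ᵥ z) a = 0 := by
      have := congrFun hzu j
      simpa [hzj, huj] using this
    simpa [hα] using hzu
  obtain ⟨m, hm⟩ := ih _
    ((Finset.erase_subset _ _).trans_ssubset (Finset.erase_ssubset ha)) hns
  exact ⟨_, hm.extend hA ha hjS haj⟩

lemma nonsingOn_of_unique {A : Matrix V V F} (hF : (2 : F) ≠ 0) (hA : Aᵀ = -A) (S : Finset V)
    (m : V → V) (hm : MatchesOn A S m)
    (huniq : ∀ m', MatchesOn A S m' → ∀ i ∈ S, m' i = m i) : NonsingOn A S := by
  induction S using Finset.strongInduction with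
  | H S ih =>
  intro x hx0 hx
  ext a
  by_cases ha : a ∈ S
  swap
  · exact hx0 a ha
  obtain ⟨hbS, hba, hab⟩ := hm a ha
  generalize hb : m a = b at hbS hba hab
  have hne : b ≠ a := by rintro rfl; exact hab (skew_diag hF hA b)
  have hsub : (S.erase a).erase b ⊂ S :=
    (Finset.erase_subset _ _).trans_ssubset (Finset.erase_ssubset ha)
  have hns : NonsingOn A ((S.erase a).erase b) := by
    apply ih _ hsub
    · intro i hi
      simp only [Finset.mem_erase] at hi ⊢
      obtain ⟨h1, h2, h3⟩ := hm i hi.2.2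
      refine ⟨⟨fun h => ?_, fun h => ?_, h1⟩, h2, h3⟩
      · exact hi.2.1 (by rw [← h2, h, hba])
      · exact hi.1 (by rw [← h2, h, hb])
    · intro m' hm' i hi
      simp only [Finset.mem_erase] at hi
      have := huniq _ (hm'.extend hA ha hbS hab) i hi.2.2
      simpa [hi.1, hi.2.1] using this
  obtain ⟨u, hu0, hu⟩ := hns.exists_solution (-(A *ᵥ Pi.single b 1))
  -- `y` spans the kernel of `A[S \ {a}]`
  obtain ⟨y, hyb, hya, hyS, hy⟩ : ∃ y : V → F, y b = 1 ∧ y a = 0 ∧ (∀ i, i ∉ S → y i = 0) ∧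
      ∀ i ∈ (S.erase a).erase b, (A *ᵥ y) i = 0 := by
    refine ⟨u + Pi.single b 1, ?_, ?_, ?_, ?_⟩
    · simp [hu0 b (by simp)]
    · simp [hu0 a (by simp), hne.symm]
    · intro i hi
      have : i ≠ b := by rintro rfl; exact hi hbS
      simp [hu0 i (by simp [hi]), this]
    · intro i hi
      rw [mulVec_add, Pi.add_apply, hu i hi]
      simp
  have hyAb : (A *ᵥ y) b = 0 := by
    have h1 : y ⬝ᵥ (A *ᵥ y) = y b * (A *ᵥ y) b := by
      apply dot_eq_single
      intro i hib
      by_cases hia : i = a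
      · exact Or.inl (hia ▸ hya)
      by_cases hi : i ∈ S
      · exact Or.inr (hy i (by simp [hi, hia, hib]))
      · exact Or.inl (hyS i hi)
    rw [skew_dot_self hF hA, hyb, one_mul] at h1
    exact h1.symm
  have hyA : ∀ i ∈ S, i ≠ a → (A *ᵥ y) i = 0 := by
    intro i hi hia
    by_cases hib : i = b
    · rw [hib, hyAb]
    · exact hy i (by simp [hi, hia, hib])
  have hdot : ∀ z : V → F, (∀ i, i ∉ S → z i = 0) → z ⬝ᵥ (A *ᵥ y) = z a * (A *ᵥ y) a := by
    intro z hz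
    apply dot_eq_single
    intro i hia
    by_cases hi : i ∈ S
    · exact Or.inr (hyA i hi hia)
    · exact Or.inl (hz i hi)
  -- the only edge from `a` into the support of `y` is the matching edge
  have hkey : ∀ j, j ≠ b → A a j * y j = 0 := by
    intro j hjb
    by_contra hj
    have haj : A a j ≠ 0 := left_ne_zero_of_mul hj
    have hyj : y j ≠ 0 := right_ne_zero_of_mul hj
    have hjS : j ∈ S := by by_contra hn; exact hyj (hyS j hn)
    have hnsj : NonsingOn A ((S.erase a).erase j) := by
      intro z hz0 hz
      have hza : z a = 0 := hz0 a (by simp)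
      have hzj : z j = 0 := hz0 j (by simp)
      have hzS : ∀ i, i ∉ S → z i = 0 := fun i hi => hz0 i (by simp [hi])
      have hAzj : (A *ᵥ z) j = 0 := by
        have h1 : y ⬝ᵥ (A *ᵥ z) = y j * (A *ᵥ z) j := by
          apply dot_eq_single
          intro i hij
          by_cases hia : i = a
          · exact Or.inl (hia ▸ hya)
          by_cases hi : i ∈ S
          · exact Or.inr (hz i (by simp [hi, hia, hij]))
          · exact Or.inl (hyS i hi)
        rw [skew_dot hA, hdot z hzS, hza, zero_mul, neg_zero] at h1
        exact (mul_eq_zero.mp h1.symm).resolve_left hyj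
      have hzy : z - z b • y = 0 := by
        apply hns
        · intro i hi
          by_cases hib : i = b
          · subst hib; simp [hyb]
          by_cases hia : i = a
          · subst hia; simp [hza, hya]
          · have hiS : i ∉ S := fun h => hi (by simp [h, hia, hib])
            simp [hzS i hiS, hyS i hiS]
        · intro i hi
          rw [mulVec_sub, mulVec_smul, Pi.sub_apply, Pi.smul_apply, hy i hi]
          simp only [Finset.mem_erase] at hi
          by_cases hij : i = j
          · simp [hij, hAzj]
          · simp [hz i (by simp [hi, hij])]
      have hzb : z b = 0 := by
        have := congrFun hzy j
        simpa [hzj, hyj] using this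
      simpa [hzb] using hzy
    obtain ⟨m', hm'⟩ := exists_matchesOn hF hA _ hnsj
    have := huniq _ (hm'.extend hA ha hjS haj) a ha
    simp only [if_true] at this
    exact hjb (this.trans hb)
  have hc : (A *ᵥ y) a = A a b := by
    have : (A *ᵥ y) a = A a b * y b := Fintype.sum_eq_single b hkey
    rw [this, hyb, mul_one]
  have h1 := hdot x hx0
  have h2 : y ⬝ᵥ (A *ᵥ x) = 0 := by
    rw [dot_eq_single y _ a, hya, zero_mul]
    intro i _
    by_cases hi : i ∈ S
    · exact Or.inr (hx i hi)
    · exact Or.inl (hyS i hi)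
  rw [skew_dot hA, h2, neg_zero, hc] at h1
  exact (mul_eq_zero.mp h1.symm).resolve_right hab

omit [DecidableEq V] in
lemma NonsingOn.rank_eq {A : Matrix V V F} (h : NonsingOn A Finset.univ) :
    A.rank = Fintype.card V := by
  have hinj : Function.Injective A.mulVecLin := by
    rw [injective_iff_map_eq_zero]
    intro z hz
    exact h z (by simp) fun i _ => congrFun hz i
  rw [Matrix.rank, LinearMap.finrank_range_of_inj hinj, Module.finrank_fintype_fun_eq_card]

omit [Fintype V] [DecidableEq V] in
lemma isPerfectMatchingSet_range {G : SimpleGraph V} {m : V → V} (h1 : ∀ v, m (m v) = v)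
    (h2 : ∀ v, G.Adj v (m v)) :
    IsPerfectMatchingSet G (Set.range fun v => s(v, m v)) := by
  refine ⟨⟨?_, ?_⟩, fun v => ⟨_, ⟨v, rfl⟩, by simp⟩⟩
  · rintro _ ⟨v, rfl⟩
    exact h2 v
  · -- the edge of the range through `x` is `s(x, m x)`
    have key : ∀ v x, x ∈ s(v, m v) → s(v, m v) = s(x, m x) := by
      intro v x hx
      rcases Sym2.mem_iff.mp hx with rfl | rfl
      · rfl
      · rw [h1, Sym2.eq_swap]
    rintro _ ⟨v, rfl⟩ _ ⟨w, rfl⟩ hne x hx hx'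
    exact hne ((key v x hx).trans (key w x hx').symm)

omit [Fintype V] [DecidableEq V] in
lemma exists_involution {G : SimpleGraph V} {M : Set (Sym2 V)} (hM : IsPerfectMatchingSet G M) :
    ∃ m : V → V, (∀ v, m (m v) = v) ∧ ∀ v, G.Adj v (m v) := by
  obtain ⟨⟨hsub, hdisj⟩, hcov⟩ := hM
  have h : ∀ v, ∃ w, s(v, w) ∈ M := by
    intro v
    obtain ⟨e, he, w, rfl⟩ := hcov v
    exact ⟨w, he⟩
  choose m hm using h
  refine ⟨m, fun v => ?_, fun v => hsub (hm v)⟩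
  have heq : s(v, m v) = s(m v, m (m v)) := by
    by_contra hne
    exact hdisj _ (hm v) _ (hm (m v)) hne (m v) (by simp) (by simp)
  rw [Sym2.eq_swap] at heq
  exact (Sym2.congr_right.mp heq).symm

omit [DecidableEq V] in
/-- Orient each edge along a linear order of the vertices and use the entries `1` and `-1`. -/
lemma exists_skewDescribes (F : Type) [Field F] (G : SimpleGraph V) :
    ∃ A : Matrix V V F, SkewDescribes F G A := by
  classical
  let e := Fintype.equivFin V
  refine ⟨Matrix.of fun i j => if G.Adj i j then (if e i < e j then 1 else -1) else 0, ?_, ?_⟩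
  · ext i j
    by_cases hadj : G.Adj i j
    · have hne : e i ≠ e j := fun h => hadj.ne (e.injective h)
      rcases lt_or_gt_of_ne hne with hlt | hlt
      · simp [hadj, hadj.symm, hlt, hlt.not_gt]
      · simp [hadj, hadj.symm, hlt, hlt.not_gt]
    · have hadj' : ¬ G.Adj j i := fun h => hadj h.symm
      simp [hadj, hadj']
  · intro i j _
    by_cases hadj : G.Adj i j
    · by_cases hlt : e i < e j <;> simp [hadj, hlt]
    · simp [hadj]

end Helpers

/-- If `G` has a unique perfect matching, then its minimum skew rank over a
field of characteristic not `2` equals the number of vertices. -/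
theorem minSkewRank_of_unique_perfect_matching (F : Type) [Field F] (hF : (2 : F) ≠ 0)
    {V : Type} [Fintype V] (G : SimpleGraph V)
    (huniq : ∃! M : Set (Sym2 V), IsPerfectMatchingSet G M) :
    minSkewRank F G = Fintype.card V := by
  classical
  obtain ⟨M, hM, hMuniq⟩ := huniq
  obtain ⟨m, hm1, hm2⟩ := exists_involution hM
  have hrank : ∀ A : Matrix V V F, SkewDescribes F G A → A.rank = Fintype.card V := by
    rintro A ⟨hA, hAG⟩
    apply NonsingOn.rank_eq
    apply nonsingOn_of_unique hF hA _ m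
    · exact fun i _ => ⟨by simp, hm1 i, (hAG i _ (hm2 i).ne).mpr (hm2 i)⟩
    · intro m' hm' v _
      have h1 : ∀ v, m' (m' v) = v := fun v => (hm' v (by simp)).2.1
      have h2 : ∀ v, G.Adj v (m' v) := by
        intro v
        have h := (hm' v (by simp)).2.2
        refine (hAG v _ fun hv => h ?_).mp h
        rw [← hv]
        exact skew_diag hF hA v
      have heq := (hMuniq _ (isPerfectMatchingSet_range h1 h2)).trans
        (hMuniq _ (isPerfectMatchingSet_range hm1 hm2)).symm
      obtain ⟨w, hw⟩ : s(v, m' v) ∈ Set.range fun v => s(v, m v) := by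
        rw [← heq]; exact ⟨v, rfl⟩
      rcases Sym2.eq_iff.mp hw with ⟨rfl, h⟩ | ⟨h, h'⟩
      · exact h.symm
      · rw [← h, ← h', hm1]
  have hset : {r : ℕ | ∃ A : Matrix V V F, SkewDescribes F G A ∧ A.rank = r} =
      {Fintype.card V} := by
    ext r
    constructor
    · rintro ⟨A, hA, rfl⟩
      exact hrank A hA
    · rintro rfl
      obtain ⟨A, hA⟩ := exists_skewDescribes F G
      exact ⟨A, hA, hrank A hA⟩
  rw [minSkewRank, hset, csInf_singleton]
end

section
/- Let F be an infinite field of characteristic not 2 and let G be a simple graph with a cut vertex v such that G = G₁ ∪ G₂ with V(G₁) ∩ V(G₂) = {v}, where G₁ and G₂ are complete multipartite graphs such that G₁ − v and G₂ − v each contain at least one edge. Then mr⁻(F,G) = 4. -/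
/-!
The ends of an edge of `G₁ - v` and of an edge of `G₂ - v` index a `4 × 4` principal submatrix
that is block diagonal with two invertible skew `2 × 2` blocks, so the rank is at least `4` (`four_le_rank_of_skewDescribes`).

Conversely, a complete multipartite graph on `V₁` with parts the fibres of `f` is described by
the rank-two skew matrix `x yᵀ - y xᵀ`, where `x` is the indicator of `V₁` and `y i = c (f i)` on
`V₁` for an injection `c : ℕ → F`, which exists as `F` is infinite. Since `V₁` and `V₂` meet in the
single vertex `v`, the sum of the two matrices obtained from `G₁` and `G₂` describes `G`, and it
has rank at most `4` (`exists_skewDescribes_rank_le_four`).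
-/

open Matrix

/-- `G` is a complete multipartite graph: its vertex set is partitioned into the
(nonempty) fibres of `f`, and two vertices are adjacent iff they lie in
different parts. -/
def IsCompleteMultipartite {V : Type} (G : SimpleGraph V) : Prop :=
  ∃ f : V → ℕ, ∀ a b : V, G.Adj a b ↔ f a ≠ f b

theorem SkewDescribes.apply_swap {F : Type} [Field F] {V : Type} {G : SimpleGraph V}
    {A : Matrix V V F} (h : SkewDescribes F G A) (i j : V) : A j i = -A i j := by
  simpa using congrFun (congrFun h.1 i) j

/-- The diagonal of a skew-symmetric matrix vanishes when the characteristic is not `2`. -/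
theorem SkewDescribes.apply_self {F : Type} [Field F] (hF : (2 : F) ≠ 0) {V : Type}
    {G : SimpleGraph V} {A : Matrix V V F} (h : SkewDescribes F G A) (i : V) : A i i = 0 := by
  have h1 := h.apply_swap i i
  have h2 : (2 : F) * A i i = 0 := by linear_combination h1
  exact (mul_eq_zero.mp h2).resolve_left hF

/-- Two edges `ab`, `cd` that induce `2K₂` give the principal minor `(A a b * A c d) ^ 2 ≠ 0`. -/
theorem four_le_rank_of_skewDescribes {F : Type} [Field F] (hF : (2 : F) ≠ 0) {V : Type}
    [Fintype V] {G : SimpleGraph V} {A : Matrix V V F} (h : SkewDescribes F G A)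
    {a b c d : V} (hab : G.Adj a b) (hcd : G.Adj c d)
    (hac : a ≠ c ∧ ¬ G.Adj a c) (had : a ≠ d ∧ ¬ G.Adj a d)
    (hbc : b ≠ c ∧ ¬ G.Adj b c) (hbd : b ≠ d ∧ ¬ G.Adj b d) : 4 ≤ A.rank := by
  have zero : ∀ {i j : V}, i ≠ j ∧ ¬ G.Adj i j → A i j = 0 := fun {i j} hij => by
    by_contra h0
    exact hij.2 ((h.2 i j hij.1).1 h0)
  have hp : A a b ≠ 0 := (h.2 a b hab.ne).2 hab
  have hq : A c d ≠ 0 := (h.2 c d hcd.ne).2 hcd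
  have hB : A.submatrix ![a, b, c, d] ![a, b, c, d] =
      !![0, A a b, 0, 0; -A a b, 0, 0, 0; 0, 0, 0, A c d; 0, 0, -A c d, 0] := by
    ext i j
    fin_cases i <;> fin_cases j <;>
      simp [h.apply_self hF, zero hac, zero had, zero hbc, zero hbd, h.apply_swap a b,
        h.apply_swap c d, h.apply_swap a c, h.apply_swap a d, h.apply_swap b c,
        h.apply_swap b d]
  have hdet : (A.submatrix ![a, b, c, d] ![a, b, c, d]).det ≠ 0 := by
    have : (A.submatrix ![a, b, c, d] ![a, b, c, d]).det = (A a b * A c d) ^ 2 := by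
      rw [hB]
      simp [Matrix.det_succ_row_zero, Fin.sum_univ_succ, Fin.succAbove]
      ring
    rw [this]
    exact pow_ne_zero 2 (mul_ne_zero hp hq)
  have hrank : (A.submatrix ![a, b, c, d] ![a, b, c, d]).rank = 4 := by
    simpa using Matrix.rank_of_isUnit _
      ((Matrix.isUnit_iff_isUnit_det _).2 (isUnit_iff_ne_zero.2 hdet))
  rw [← hrank]
  exact Matrix.rank_submatrix_le _ _ _

/-- A graph whose edges lie in complete multipartite graphs on `V₁`, `V₂` with one common vertex is described
by a skew matrix that is a sum of two matrices of the form `x yᵀ - y xᵀ`. -/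
theorem exists_skewDescribes_rank_le_four {F : Type} [Field F] [Infinite F] {V : Type}
    [Fintype V] (G : SimpleGraph V) (v : V) (V₁ V₂ : Set V)
    (hint : V₁ ∩ V₂ = {v})
    (hedges : ∀ a b : V, G.Adj a b → (a ∈ V₁ ∧ b ∈ V₁) ∨ (a ∈ V₂ ∧ b ∈ V₂))
    (hm₁ : IsCompleteMultipartite (G.induce V₁))
    (hm₂ : IsCompleteMultipartite (G.induce V₂)) :
    ∃ A : Matrix V V F, SkewDescribes F G A ∧ A.rank ≤ 4 := by
  classical
  obtain ⟨f, hf⟩ := hm₁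
  obtain ⟨g, hg⟩ := hm₂
  obtain ⟨c⟩ : Nonempty (ℕ ↪ F) := ⟨Infinite.natEmbedding F⟩
  let x : V → F := fun i => if i ∈ V₁ then 1 else 0
  let y : V → F := fun i => if hi : i ∈ V₁ then c (f ⟨i, hi⟩) else 0
  let z : V → F := fun i => if i ∈ V₂ then 1 else 0
  let w : V → F := fun i => if hi : i ∈ V₂ then c (g ⟨i, hi⟩) else 0
  let B : Matrix V (Fin 4) F := Matrix.of fun i => ![x i, y i, z i, w i]
  let C : Matrix (Fin 4) V F := Matrix.of ![y, -x, w, -z]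
  -- The product `B * C` is `(x yᵀ - y xᵀ) + (z wᵀ - w zᵀ)`, factored through dimension `4`.
  have hA : ∀ i j, (B * C) i j = x i * y j - y i * x j + (z i * w j - w i * z j) := by
    intro i j
    simp [B, C, Matrix.mul_apply, Fin.sum_univ_succ]
    ring
  refine ⟨B * C, ⟨?_, ?_⟩, ?_⟩
  · ext i j
    rw [Matrix.transpose_apply, Matrix.neg_apply, hA, hA]
    ring
  · intro i j hij
    rw [hA]
    have hboth : ∀ k, k ∈ V₁ → k ∈ V₂ → k = v := fun k h1 h2 => by
      have : k ∈ V₁ ∩ V₂ := ⟨h1, h2⟩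
      rw [hint] at this
      exact this
    -- At most one of the two rank-two summands is nonzero at `(i, j)`: `V₁ ∩ V₂` is a single vertex.
    have hnot : ¬ ((i ∈ V₁ ∧ j ∈ V₁) ∧ (i ∈ V₂ ∧ j ∈ V₂)) := fun hh =>
      hij ((hboth i hh.1.1 hh.2.1).trans (hboth j hh.1.2 hh.2.2).symm)
    have hE := hedges i j
    by_cases h1 : i ∈ V₁ ∧ j ∈ V₁
    · have hzw : z i * w j - w i * z j = 0 := by
        by_cases hi : i ∈ V₂
        · have hj : j ∉ V₂ := fun hj => hnot ⟨h1, hi, hj⟩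
          simp [z, w, hj]
        · simp [z, w, hi]
      rw [hzw]
      have := hf ⟨i, h1.1⟩ ⟨j, h1.2⟩
      simp only [SimpleGraph.comap_adj, Function.Embedding.subtype_apply] at this
      rw [this]
      simpa [x, y, h1.1, h1.2, sub_eq_zero] using not_congr (eq_comm (a := f ⟨j, h1.2⟩))
    · have hxy : x i * y j - y i * x j = 0 := by
        by_cases hi : i ∈ V₁
        · have hj : j ∉ V₁ := fun hj => h1 ⟨hi, hj⟩
          simp [x, y, hj]
        · simp [x, y, hi]
      rw [hxy]
      by_cases h2 : i ∈ V₂ ∧ j ∈ V₂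
      · have := hg ⟨i, h2.1⟩ ⟨j, h2.2⟩
        simp only [SimpleGraph.comap_adj, Function.Embedding.subtype_apply] at this
        rw [this]
        simpa [z, w, h2.1, h2.2, sub_eq_zero] using not_congr (eq_comm (a := g ⟨j, h2.2⟩))
      · have hzw : z i * w j - w i * z j = 0 := by
          by_cases hi : i ∈ V₂
          · have hj : j ∉ V₂ := fun hj => h2 ⟨hi, hj⟩
            simp [z, w, hj]
          · simp [z, w, hi]
        rw [hzw]
        simpa using fun h => (hE h).elim h1 h2
  · exact (Matrix.rank_mul_le_left B C).trans (by simpa using B.rank_le_card_width)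

/-- Sufficiency, case (i): if `v` is a cut vertex of `G` and `G = G₁ ∪ G₂` with
`V(G₁) ∩ V(G₂) = {v}`, where `G₁`, `G₂` are complete multipartite graphs such
that `G₁ − v` and `G₂ − v` each contain an edge, then `mr⁻(F,G) = 4`. -/
theorem minSkewRank_eq_four_case_one (F : Type) [Field F] [Infinite F]
    (hF : (2 : F) ≠ 0) {V : Type} [Fintype V] [DecidableEq V]
    (G : SimpleGraph V) (v : V)
    (hconn : G.Connected) (hcut : ¬ (G.induce {u : V | u ≠ v}).Connected)
    (V₁ V₂ : Set V)
    (hcover : V₁ ∪ V₂ = Set.univ)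
    (hint : V₁ ∩ V₂ = {v})
    (hedges : ∀ a b : V, G.Adj a b → (a ∈ V₁ ∧ b ∈ V₁) ∨ (a ∈ V₂ ∧ b ∈ V₂))
    (hm₁ : IsCompleteMultipartite (G.induce V₁))
    (hm₂ : IsCompleteMultipartite (G.induce V₂))
    (he₁ : ∃ a b, (G.induce (V₁ \ {v})).Adj a b)
    (he₂ : ∃ a b, (G.induce (V₂ \ {v})).Adj a b) :
    minSkewRank F G = 4 := by
  obtain ⟨⟨a, ha⟩, ⟨b, hb⟩, hab⟩ := he₁
  obtain ⟨⟨c, hc⟩, ⟨d, hd⟩, hcd⟩ := he₂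
  have hboth : ∀ k, k ∈ V₁ → k ∈ V₂ → k = v := fun k h1 h2 => by
    have : k ∈ V₁ ∩ V₂ := ⟨h1, h2⟩
    rw [hint] at this
    exact this
  have sep : ∀ i j, i ∈ V₁ \ {v} → j ∈ V₂ \ {v} → i ≠ j ∧ ¬ G.Adj i j := by
    intro i j hi hj
    refine ⟨fun h => hi.2 (hboth i hi.1 (h ▸ hj.1)), fun h => ?_⟩
    rcases hedges i j h with h | h
    · exact hj.2 (hboth j h.2 hj.1)
    · exact hi.2 (hboth i hi.1 h.1)
  obtain ⟨A, hA, hr⟩ :=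
    exists_skewDescribes_rank_le_four (F := F) G v V₁ V₂ hint hedges hm₁ hm₂
  have hmem : A.rank ∈ {r : ℕ | ∃ A : Matrix V V F, SkewDescribes F G A ∧ A.rank = r} :=
    ⟨A, hA, rfl⟩
  refine le_antisymm ((Nat.sInf_le hmem).trans hr) (le_csInf ⟨_, hmem⟩ ?_)
  rintro _ ⟨M, hM, rfl⟩
  exact four_le_rank_of_skewDescribes hF hM hab hcd (sep a c ha hc) (sep a d ha hd)
    (sep b c hb hc) (sep b d hb hd)
end
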